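/- Let G and H be countable graphs of vertex degree bound d which are equivalent, meaning every rooted ball (of any radius) occurring in G occurs in H and vice versa. Then the graph Laplacians have equal operator norms of all polynomials: for every real polynomial P, ‖P(L_G)‖ = ‖P(L_H)‖, where L_G is the Laplacian on ℓ²(V(G)). Consequently Spec(L_G) = Spec(L_H). -/

import Mathlib

/-- The closed ball of radius `r` around `x` in the graph metric. -/
def gball {V : Type*} (G : SimpleGraph V) (x : V) (r : ℕ) : Set V :=
  {y | G.Reachable x y ∧ G.dist x y ≤ r}

/-- The rooted balls `B_r(G,x)` and `B_r(H,y)` are rooted-isomorphic. -/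
def BallIso {V W : Type*} (G : SimpleGraph V) (H : SimpleGraph W)
    (x : V) (y : W) (r : ℕ) : Prop :=
  ∃ e : gball G x r ≃ gball H y r,
    (∀ (hx : x ∈ gball G x r) (hy : y ∈ gball H y r), e ⟨x, hx⟩ = ⟨y, hy⟩) ∧
    ∀ a b : gball G x r, G.Adj a b ↔ H.Adj (e a) (e b)

/-- `G` and `H` are equivalent: the same isomorphism types of rooted balls occur in both. -/
def GraphEquiv {V W : Type*} (G : SimpleGraph V) (H : SimpleGraph W) : Prop :=
  (∀ (x : V) (r : ℕ), ∃ y : W, BallIso G H x y r) ∧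
  (∀ (y : W) (r : ℕ), ∃ x : V, BallIso G H x y r)

section SpectralHelpers

/-- If `T` is symmetric and polynomial norms agree, invertibility of `lam - T` transfers. -/
lemma aux_spec_transfer {E F : Type} [NormedAddCommGroup E] [InnerProductSpace ℝ E]
    [CompleteSpace E] [NormedAddCommGroup F] [InnerProductSpace ℝ F] [CompleteSpace F]
    (T : E →L[ℝ] E) (S : F →L[ℝ] F)
    (hT : ∀ f g : E, inner ℝ (T f) g = inner ℝ f (T g))
    (hP : ∀ P : Polynomial ℝ, ‖Polynomial.aeval T P‖ = ‖Polynomial.aeval S P‖) (lam : ℝ)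
    (hu : IsUnit (algebraMap ℝ (E →L[ℝ] E) lam - T)) :
    IsUnit (algebraMap ℝ (F →L[ℝ] F) lam - S) := by
  obtain ⟨u, hu⟩ := hu
  set U : E →L[ℝ] E := algebraMap ℝ (E →L[ℝ] E) lam - T with hU
  have hUs : ∀ f g : E, inner ℝ (U f) g = inner ℝ f (U g) := by
    intro f g
    simp only [hU, Algebra.algebraMap_eq_smul_one, sub_apply, ContinuousLinearMap.smul_apply,
      ContinuousLinearMap.one_apply, inner_sub_left, inner_sub_right, inner_smul_left,
      inner_smul_right, hT]
    simp
  set K : ℝ := ‖U‖ with hK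
  have hK0 : 0 ≤ K := norm_nonneg _
  set N : ℝ := ‖(↑u⁻¹ : E →L[ℝ] E)‖ + 1 with hN
  have hN1 : 1 ≤ N := by
    have := norm_nonneg (↑u⁻¹ : E →L[ℝ] E)
    linarith
  have hbelow : ∀ f : E, ‖f‖ ≤ N * ‖U f‖ := by
    intro f
    have h1 : (↑u⁻¹ : E →L[ℝ] E) (U f) = f := by
      rw [← hu, ← ContinuousLinearMap.mul_apply, Units.inv_mul, ContinuousLinearMap.one_apply]
    calc ‖f‖ = ‖(↑u⁻¹ : E →L[ℝ] E) (U f)‖ := by rw [h1]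
      _ ≤ ‖(↑u⁻¹ : E →L[ℝ] E)‖ * ‖U f‖ := ContinuousLinearMap.le_opNorm _ _
      _ ≤ N * ‖U f‖ := by
        have := norm_nonneg (U f)
        nlinarith
  set ε : ℝ := (K ^ 2 + 1)⁻¹ with hε
  have hεpos : 0 < ε := by positivity
  have hε1 : ε * (K ^ 2 + 1) = 1 := inv_mul_cancel₀ (by positivity)
  have hεle : ε ≤ 1 := by nlinarith [sq_nonneg K]
  let Q : Polynomial ℝ := Polynomial.C lam - Polynomial.X
  let P : Polynomial ℝ := 1 - Polynomial.C ε * Q ^ 2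
  have hPT : Polynomial.aeval T P = 1 - ε • U ^ 2 := by
    simp [P, Q, hU, Algebra.smul_def]
  have hPS : Polynomial.aeval S P = 1 - ε • (algebraMap ℝ (F →L[ℝ] F) lam - S) ^ 2 := by
    simp [P, Q, Algebra.smul_def]
  set q : ℝ := 1 - ε / N ^ 2 with hq
  have hN2 : 1 ≤ N ^ 2 := by nlinarith
  have hdiv : ε / N ^ 2 ≤ 1 := by
    rw [div_le_one (by positivity)]; linarith
  have hdivpos : 0 < ε / N ^ 2 := by positivity
  have hq0 : 0 ≤ q := by linarith
  have hq1 : q < 1 := by linarith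
  have hnorm : ‖Polynomial.aeval T P‖ ≤ Real.sqrt q := by
    refine ContinuousLinearMap.opNorm_le_bound _ (Real.sqrt_nonneg _) fun f => ?_
    have hsq : ‖(Polynomial.aeval T P) f‖ ^ 2 ≤ q * ‖f‖ ^ 2 := by
      have e1 : (Polynomial.aeval T P) f = f - ε • U (U f) := by
        rw [hPT]; simp [pow_two]
      rw [e1, norm_sub_sq_real, inner_smul_right, ← hUs, real_inner_self_eq_norm_sq, norm_smul,
        Real.norm_of_nonneg hεpos.le]
      have h2 : ‖U (U f)‖ ^ 2 ≤ K ^ 2 * ‖U f‖ ^ 2 := by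
        rw [← mul_pow]
        exact pow_le_pow_left₀ (norm_nonneg _) (ContinuousLinearMap.le_opNorm _ _) 2
      have h3 : ‖f‖ ^ 2 ≤ N ^ 2 * ‖U f‖ ^ 2 := by
        rw [← mul_pow]
        exact pow_le_pow_left₀ (norm_nonneg _) (hbelow f) 2
      have h4 : ε / N ^ 2 * ‖f‖ ^ 2 ≤ ε * ‖U f‖ ^ 2 := by
        rw [div_mul_eq_mul_div, div_le_iff₀ (by positivity)]
        nlinarith
      have h5 : (ε * ‖U (U f)‖) ^ 2 ≤ ε * ‖U f‖ ^ 2 := by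
        rw [mul_pow]
        have h6 : ε ^ 2 * ‖U (U f)‖ ^ 2 ≤ ε ^ 2 * (K ^ 2 * ‖U f‖ ^ 2) :=
          mul_le_mul_of_nonneg_left h2 (by positivity)
        have h7 : ε * K ^ 2 ≤ 1 := by linarith
        have h8 : (ε * K ^ 2) * (ε * ‖U f‖ ^ 2) ≤ 1 * (ε * ‖U f‖ ^ 2) :=
          mul_le_mul_of_nonneg_right h7 (by positivity)
        linarith
      rw [hq, sub_mul, one_mul]
      linarith
    calc ‖(Polynomial.aeval T P) f‖ = Real.sqrt (‖(Polynomial.aeval T P) f‖ ^ 2) :=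
          (Real.sqrt_sq (norm_nonneg _)).symm
      _ ≤ Real.sqrt (q * ‖f‖ ^ 2) := Real.sqrt_le_sqrt hsq
      _ = Real.sqrt q * ‖f‖ := by rw [Real.sqrt_mul hq0, Real.sqrt_sq (norm_nonneg _)]
  have hlt : ‖Polynomial.aeval S P‖ < 1 := by
    rw [← hP]
    refine hnorm.trans_lt ?_
    rw [Real.sqrt_lt' one_pos]; linarith
  have hunit := isUnit_one_sub_of_norm_lt_one hlt
  rw [hPS, sub_sub_cancel] at hunit
  have h9 : IsUnit ((algebraMap ℝ (F →L[ℝ] F) lam - S) ^ 2) := by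
    have : (algebraMap ℝ (F →L[ℝ] F) lam - S) ^ 2
        = (Units.mk0 ε hεpos.ne')⁻¹ • (ε • (algebraMap ℝ (F →L[ℝ] F) lam - S) ^ 2) := by
      rw [Units.smul_def, smul_smul]
      simp [hεpos.ne']
    rw [this]
    exact hunit.smul _
  exact (isUnit_pow_iff two_ne_zero).1 h9

end SpectralHelpers

section GraphHelpers

lemma aux_gball_mono {V : Type} (G : SimpleGraph V) (x : V) {m n : ℕ} (h : m ≤ n) :
    gball G x m ⊆ gball G x n := fun _ hy => ⟨hy.1, hy.2.trans h⟩

lemma aux_gball_self {V : Type} (G : SimpleGraph V) (x : V) (n : ℕ) : x ∈ gball G x n :=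
  ⟨SimpleGraph.Reachable.refl x, by simp⟩

lemma aux_gball_adj {V : Type} (G : SimpleGraph V) (x : V) {n : ℕ} {a b : V}
    (ha : a ∈ gball G x n) (hab : G.Adj a b) : b ∈ gball G x (n + 1) := by
  obtain ⟨hr, hd⟩ := ha
  obtain ⟨p, hp⟩ := hr.exists_walk_length_eq_dist
  refine ⟨hr.trans hab.reachable, ?_⟩
  have := SimpleGraph.dist_le (p.concat hab)
  rw [SimpleGraph.Walk.length_concat] at this
  omega

lemma aux_gball_succ {V : Type} (G : SimpleGraph V) (x : V) {n : ℕ} {a : V}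
    (ha : a ∈ gball G x (n + 1)) : a = x ∨ ∃ b ∈ gball G x n, G.Adj b a := by
  obtain ⟨hr, hd⟩ := ha
  obtain ⟨p, hp⟩ := hr.symm.exists_walk_length_eq_dist
  cases p with
  | nil => exact Or.inl rfl
  | @cons _ b _ h p =>
    refine Or.inr ⟨b, ⟨p.reachable.symm, ?_⟩, h.symm⟩
    have := SimpleGraph.dist_le p
    rw [SimpleGraph.Walk.length_cons, SimpleGraph.dist_comm] at hp
    rw [SimpleGraph.dist_comm]
    omega

lemma aux_gball_zero {V : Type} (G : SimpleGraph V) (x : V) {a : V}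
    (ha : a ∈ gball G x 0) : a = x := by
  have := ha.1.dist_eq_zero_iff.1 (Nat.le_zero.1 ha.2)
  exact this.symm

lemma aux_ballIso_symm {V W : Type} {G : SimpleGraph V} {H : SimpleGraph W} {x : V} {y : W}
    {r : ℕ} (h : BallIso G H x y r) : BallIso H G y x r := by
  obtain ⟨e, h1, h2⟩ := h
  refine ⟨e.symm, fun hy hx => ?_, fun a b => ?_⟩
  · rw [Equiv.symm_apply_eq, h1 hx hy]
  · rw [h2]; simp

variable {V W : Type} {G : SimpleGraph V} {H : SimpleGraph W} {x : V} {y : W} {r : ℕ}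

lemma aux_iso_ball (e : gball G x r ≃ gball H y r)
    (h1 : ∀ (hx : x ∈ gball G x r) (hy : y ∈ gball H y r), e ⟨x, hx⟩ = ⟨y, hy⟩)
    (h2 : ∀ a b : gball G x r, G.Adj a b ↔ H.Adj (e a) (e b)) :
    ∀ n ≤ r, ∀ a : gball G x r, (a : V) ∈ gball G x n → (e a : W) ∈ gball H y n := by
  have hroot : ∀ n, ∀ a : gball G x r, (a : V) = x → (e a : W) ∈ gball H y n := by
    intro n a ha
    have : a = ⟨x, aux_gball_self G x r⟩ := Subtype.ext ha
    rw [this, h1 _ (aux_gball_self H y r)]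
    exact aux_gball_self H y n
  intro n
  induction n with
  | zero => exact fun _ a ha => hroot 0 a (aux_gball_zero G x ha)
  | succ n ih =>
    intro hn a ha
    rcases aux_gball_succ G x ha with h | ⟨b, hb, hab⟩
    · exact hroot _ a h
    · have hb' : b ∈ gball G x r := aux_gball_mono G x (by omega) hb
      have := ih (by omega) ⟨b, hb'⟩ hb
      exact aux_gball_adj H y this ((h2 ⟨b, hb'⟩ a).1 hab)

/-- `g` is the transport of `f`, supported in the ball of radius `n`. -/
def AuxRel (e : gball G x r ≃ gball H y r) (n : ℕ)
    (f : lp (fun _ : V => ℝ) 2) (g : lp (fun _ : W => ℝ) 2) : Prop :=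
  (∀ v, v ∉ gball G x n → f v = 0) ∧ (∀ a : gball G x r, g (e a : W) = f (a : V)) ∧
    (∀ w, w ∉ gball H y r → g w = 0)

lemma AuxRel.mono {e : gball G x r ≃ gball H y r} {m n : ℕ} (h : m ≤ n)
    {f : lp (fun _ : V => ℝ) 2} {g : lp (fun _ : W => ℝ) 2} (hr : AuxRel e m f g) :
    AuxRel e n f g :=
  ⟨fun v hv => hr.1 v fun h' => hv (aux_gball_mono G x h h'), hr.2⟩

lemma AuxRel.add {e : gball G x r ≃ gball H y r} {n : ℕ}
    {f f' : lp (fun _ : V => ℝ) 2} {g g' : lp (fun _ : W => ℝ) 2} (h : AuxRel e n f g)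
    (h' : AuxRel e n f' g') : AuxRel e n (f + f') (g + g') := by
  refine ⟨fun v hv => ?_, fun a => ?_, fun w hw => ?_⟩
  · simp [h.1 v hv, h'.1 v hv]
  · simp [h.2.1 a, h'.2.1 a]
  · simp [h.2.2 w hw, h'.2.2 w hw]

lemma AuxRel.smul {e : gball G x r ≃ gball H y r} {n : ℕ} (c : ℝ)
    {f : lp (fun _ : V => ℝ) 2} {g : lp (fun _ : W => ℝ) 2} (h : AuxRel e n f g) :
    AuxRel e n (c • f) (c • g) := by
  refine ⟨fun v hv => ?_, fun a => ?_, fun w hw => ?_⟩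
  · simp [h.1 v hv]
  · simp [h.2.1 a]
  · simp [h.2.2 w hw]

lemma AuxRel.zero {e : gball G x r ≃ gball H y r} {n : ℕ} : AuxRel e n 0 0 := by
  refine ⟨fun v hv => ?_, fun a => ?_, fun w hw => ?_⟩ <;> simp

lemma AuxRel.norm_eq {e : gball G x r ≃ gball H y r} {n : ℕ} (hn : n ≤ r)
    {f : lp (fun _ : V => ℝ) 2} {g : lp (fun _ : W => ℝ) 2} (h : AuxRel e n f g) :
    ‖f‖ = ‖g‖ := by
  have h2 : (0 : ℝ) < (2 : ENNReal).toReal := by simp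
  rw [lp.norm_eq_tsum_rpow h2, lp.norm_eq_tsum_rpow h2]
  congr 1
  have hi : Function.Injective (fun a : gball G x r => (e a : W)) :=
    Subtype.val_injective.comp e.injective
  rw [← (Subtype.val_injective (p := fun v => v ∈ gball G x r)).tsum_eq, ← hi.tsum_eq]
  · exact tsum_congr fun a => by rw [h.2.1 a]
  · intro w hw
    by_contra hc
    apply hw
    have : w ∉ gball H y r := fun hw' => hc ⟨e.symm ⟨w, hw'⟩, by simp⟩
    simp [h.2.2 w this]
  · intro v hv
    by_contra hc
    apply hv
    have : v ∉ gball G x n := fun hw' => hc ⟨⟨v, aux_gball_mono G x hn hw'⟩, rfl⟩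
    simp [h.1 v this]

lemma AuxRel.exists (e : gball G x r ≃ gball H y r) {n : ℕ}
    (f : lp (fun _ : V => ℝ) 2) (hf : ∀ v, v ∉ gball G x n → f v = 0) :
    ∃ g, AuxRel e n f g := by
  classical
  have h2 : (0 : ℝ) < (2 : ENNReal).toReal := by simp
  have hi : Function.Injective (fun a : gball G x r => (e a : W)) :=
    Subtype.val_injective.comp e.injective
  let g : W → ℝ := fun w => if h : w ∈ gball H y r then f (e.symm ⟨w, h⟩ : V) else 0
  have hg1 : ∀ a : gball G x r, g (e a : W) = f (a : V) := fun a => by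
    simp [g]
  have hg2 : ∀ w, w ∉ gball H y r → g w = 0 := fun w hw => by simp [g, hw]
  have hmem : Memℓp (E := fun _ : W => ℝ) g 2 := by
    rw [memℓp_gen_iff h2, ← hi.summable_iff]
    · have : ((fun i => ‖g i‖ ^ (2 : ENNReal).toReal) ∘ fun a : gball G x r => (e a : W))
          = (fun i => ‖f i‖ ^ (2 : ENNReal).toReal) ∘ (Subtype.val : gball G x r → V) := by
        funext a
        simp only [Function.comp, hg1]
      rw [this]
      exact ((lp.memℓp f).summable h2).comp_injective Subtype.val_injective
    · intro w hw
      have : w ∉ gball H y r := fun hw' => hw ⟨e.symm ⟨w, hw'⟩, by simp⟩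
      simp [hg2 w this]
  exact ⟨⟨g, hmem⟩, hf, hg1, hg2⟩

/-- `L` is the Laplacian of `G`. -/
def AuxLap (G : SimpleGraph V) [G.LocallyFinite]
    (LG : lp (fun _ : V => ℝ) 2 →L[ℝ] lp (fun _ : V => ℝ) 2) : Prop :=
  ∀ (f : lp (fun _ : V => ℝ) 2) (x : V),
      (LG f : ∀ _ : V, ℝ) x
        = (G.degree x : ℝ) * (f : ∀ _ : V, ℝ) x - ∑ y ∈ G.neighborFinset x, (f : ∀ _ : V, ℝ) y

lemma AuxRel.lap [G.LocallyFinite] [H.LocallyFinite]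
    {LG : lp (fun _ : V => ℝ) 2 →L[ℝ] lp (fun _ : V => ℝ) 2}
    {LH : lp (fun _ : W => ℝ) 2 →L[ℝ] lp (fun _ : W => ℝ) 2}
    (hLG : AuxLap G LG) (hLH : AuxLap H LH) (e : gball G x r ≃ gball H y r)
    (h1 : ∀ (hx : x ∈ gball G x r) (hy : y ∈ gball H y r), e ⟨x, hx⟩ = ⟨y, hy⟩)
    (h2 : ∀ a b : gball G x r, G.Adj a b ↔ H.Adj (e a) (e b)) {n : ℕ} (hn : n + 1 ≤ r)
    {f : lp (fun _ : V => ℝ) 2} {g : lp (fun _ : W => ℝ) 2} (h : AuxRel e n f g) :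
    AuxRel e (n + 1) (LG f) (LH g) := by
  -- nonzero values of `g` come from the inner ball
  have hgne : ∀ w, g w ≠ 0 → ∃ a : gball G x r, (e a : W) = w ∧ (a : V) ∈ gball G x n := by
    intro w hw
    have hw' : w ∈ gball H y r := by
      by_contra hc; exact hw (h.2.2 w hc)
    refine ⟨e.symm ⟨w, hw'⟩, by simp, ?_⟩
    by_contra hc
    apply hw
    have := h.2.1 (e.symm ⟨w, hw'⟩)
    rw [h.1 _ hc] at this
    simpa using this
  refine ⟨fun v hv => ?_, fun a => ?_, fun w hw => ?_⟩
  · rw [hLG, h.1 v fun hc => hv (aux_gball_mono G x (Nat.le_succ n) hc), mul_zero, zero_sub,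
      neg_eq_zero]
    refine Finset.sum_eq_zero fun u hu => h.1 u fun hc => hv ?_
    rw [SimpleGraph.mem_neighborFinset] at hu
    exact aux_gball_adj G x hc hu.symm
  · rw [hLG, hLH, h.2.1 a]
    congr 1
    · by_cases ha : (a : V) ∈ gball G x n
      · congr 2
        have hea := aux_iso_ball e h1 h2 n (by omega) a ha
        have hV : ∀ u ∈ G.neighborFinset (a : V), u ∈ gball G x r := fun u hu =>
          aux_gball_mono G x hn (aux_gball_adj G x ha (by simpa using hu))
        have hW : ∀ u ∈ H.neighborFinset (e a : W), u ∈ gball H y r := fun u hu =>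
          aux_gball_mono H y hn (aux_gball_adj H y hea (by simpa using hu))
        rw [← SimpleGraph.card_neighborFinset_eq_degree,
          ← SimpleGraph.card_neighborFinset_eq_degree]
        symm
        refine Finset.card_bij (fun u hu => (e ⟨u, hV u hu⟩ : W)) ?_ ?_ ?_
        · intro u hu
          rw [SimpleGraph.mem_neighborFinset] at hu ⊢
          exact (h2 a ⟨u, _⟩).1 hu
        · intro u hu u' hu' huu
          simpa using e.injective (Subtype.ext huu)
        · intro w hw
          refine ⟨e.symm ⟨w, hW w hw⟩, ?_, by simp⟩
          rw [SimpleGraph.mem_neighborFinset] at hw ⊢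
          rw [h2]; simpa using hw
      · rw [h.1 _ ha, mul_zero, mul_zero]
    · symm
      have hV : ∀ u, f u ≠ 0 → u ∈ gball G x r := fun u hu => by
        by_contra hc
        exact hu (h.1 u fun hc' => hc (aux_gball_mono G x (by omega) hc'))
      refine Finset.sum_bij_ne_zero (fun u _ hu => (e ⟨u, hV u hu⟩ : W)) ?_ ?_ ?_ ?_
      · intro u hu hu0
        rw [SimpleGraph.mem_neighborFinset] at hu ⊢
        exact (h2 a ⟨u, _⟩).1 hu
      · intro u hu _ u' hu' _ huu
        simpa using e.injective (Subtype.ext huu)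
      · intro w hw hw0
        obtain ⟨b, rfl, hb⟩ := hgne w hw0
        refine ⟨b, ?_, ?_, rfl⟩
        · rw [SimpleGraph.mem_neighborFinset] at hw ⊢
          exact (h2 _ _).2 hw
        · rwa [← h.2.1 b]
      · intro u hu hu0
        exact (h.2.1 ⟨u, hV u hu0⟩).symm
  · rw [hLH, h.2.2 w hw, mul_zero, zero_sub, neg_eq_zero]
    refine Finset.sum_eq_zero fun u hu => ?_
    by_contra hc
    obtain ⟨b, rfl, hb⟩ := hgne u hc
    rw [SimpleGraph.mem_neighborFinset] at hu
    exact hw (aux_gball_mono H y hn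
      (aux_gball_adj H y (aux_iso_ball e h1 h2 n (by omega) b hb) hu.symm))

lemma AuxRel.aeval [G.LocallyFinite] [H.LocallyFinite]
    {LG : lp (fun _ : V => ℝ) 2 →L[ℝ] lp (fun _ : V => ℝ) 2}
    {LH : lp (fun _ : W => ℝ) 2 →L[ℝ] lp (fun _ : W => ℝ) 2}
    (hLG : AuxLap G LG) (hLH : AuxLap H LH) (e : gball G x r ≃ gball H y r)
    (h1 : ∀ (hx : x ∈ gball G x r) (hy : y ∈ gball H y r), e ⟨x, hx⟩ = ⟨y, hy⟩)
    (h2 : ∀ a b : gball G x r, G.Adj a b ↔ H.Adj (e a) (e b)) {n : ℕ} (P : Polynomial ℝ)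
    (hn : n + P.natDegree ≤ r)
    {f : lp (fun _ : V => ℝ) 2} {g : lp (fun _ : W => ℝ) 2} (h : AuxRel e n f g) :
    AuxRel e r (Polynomial.aeval LG P f) (Polynomial.aeval LH P g) := by
  have hpow : ∀ k, n + k ≤ r → AuxRel e (n + k) ((LG ^ k) f) ((LH ^ k) g) := by
    intro k
    induction k with
    | zero => intro _; simpa using h
    | succ k ih =>
      intro hk
      rw [pow_succ', pow_succ', ContinuousLinearMap.mul_apply, ContinuousLinearMap.mul_apply]
      exact AuxRel.lap hLG hLH e h1 h2 (by omega) (ih (by omega))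
  rw [Polynomial.aeval_eq_sum_range, Polynomial.aeval_eq_sum_range,
    ContinuousLinearMap.sum_apply, ContinuousLinearMap.sum_apply]
  have : ∀ s : Finset ℕ, (∀ k ∈ s, n + k ≤ r) →
      AuxRel e r (∑ k ∈ s, (P.coeff k • LG ^ k) f) (∑ k ∈ s, (P.coeff k • LH ^ k) g) := by
    classical
    intro s
    induction s using Finset.induction_on with
    | empty => intro _; simpa using AuxRel.zero
    | insert k s hk ih =>
      intro hs
      rw [Finset.sum_insert hk, Finset.sum_insert hk]
      refine AuxRel.add ?_ (ih fun j hj => hs j (Finset.mem_insert_of_mem hj))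
      have hkr := hs k (Finset.mem_insert_self k s)
      exact AuxRel.smul _ ((hpow k hkr).mono hkr)
  refine this _ fun k hk => ?_
  rw [Finset.mem_range] at hk
  omega

/-- Functions vanishing outside an adjacency-closed set are preserved. -/
lemma aux_vanish [G.LocallyFinite]
    {LG : lp (fun _ : V => ℝ) 2 →L[ℝ] lp (fun _ : V => ℝ) 2} (hLG : AuxLap G LG)
    (S : Set V) (hS : ∀ a b, G.Adj a b → a ∉ S → b ∉ S) (P : Polynomial ℝ)
    (f : lp (fun _ : V => ℝ) 2) (hf : ∀ v ∉ S, f v = 0) :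
    ∀ v ∉ S, (Polynomial.aeval LG P f) v = 0 := by
  have hpow : ∀ k, ∀ v ∉ S, ((LG ^ k) f) v = 0 := by
    intro k
    induction k with
    | zero => simpa using hf
    | succ k ih =>
      intro v hv
      rw [pow_succ', ContinuousLinearMap.mul_apply, hLG, ih v hv, mul_zero, zero_sub, neg_eq_zero]
      refine Finset.sum_eq_zero fun u hu => ih u ?_
      rw [SimpleGraph.mem_neighborFinset] at hu
      exact hS v u hu hv
  intro v hv
  rw [Polynomial.aeval_eq_sum_range, ContinuousLinearMap.sum_apply, lp.coeFn_sum,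
    Finset.sum_apply]
  refine Finset.sum_eq_zero fun k _ => ?_
  change P.coeff k • ((LG ^ k) f) v = 0
  rw [hpow k v hv, smul_zero]

lemma aux_orth (S : Set V) (f g : lp (fun _ : V => ℝ) 2) (hf : ∀ v ∉ S, f v = 0)
    (hg : ∀ v ∈ S, g v = 0) : ‖f + g‖ ^ 2 = ‖f‖ ^ 2 + ‖g‖ ^ 2 := by
  have : inner ℝ f g = 0 := by
    rw [lp.inner_eq_tsum]
    refine (tsum_congr fun v => ?_).trans tsum_zero
    by_cases hv : v ∈ S
    · simp [hg v hv]
    · simp [hf v hv]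
  rw [norm_add_sq_real, this]; ring

lemma aux_restrict (S : Set V) (f : lp (fun _ : V => ℝ) 2) :
    ∃ f₁ f₂ : lp (fun _ : V => ℝ) 2, f = f₁ + f₂ ∧ (∀ v ∈ S, f₁ v = f v) ∧ (∀ v ∉ S, f₁ v = 0) ∧
      (∀ v ∈ S, f₂ v = 0) ∧ (∀ v ∉ S, f₂ v = f v) := by
  classical
  have h2 : (0 : ℝ) < (2 : ENNReal).toReal := by simp
  have hmem : Memℓp (E := fun _ : V => ℝ) (S.indicator f) 2 := by
    rw [memℓp_gen_iff h2]
    refine Summable.of_nonneg_of_le (fun v => by positivity) (fun v => ?_)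
      ((lp.memℓp f).summable h2)
    refine Real.rpow_le_rpow (norm_nonneg _) ?_ h2.le
    exact norm_indicator_le_norm_self _ _
  let f₁ : lp (fun _ : V => ℝ) 2 := ⟨S.indicator f, hmem⟩
  have hf₁ : ∀ v, f₁ v = S.indicator f v := fun _ => rfl
  refine ⟨f₁, f - f₁, by simp, fun v hv => ?_, fun v hv => ?_, fun v hv => ?_, fun v hv => ?_⟩ <;>
  simp [hf₁, hv]

lemma aux_bound [G.LocallyFinite] [H.LocallyFinite]
    {LG : lp (fun _ : V => ℝ) 2 →L[ℝ] lp (fun _ : V => ℝ) 2}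
    {LH : lp (fun _ : W => ℝ) 2 →L[ℝ] lp (fun _ : W => ℝ) 2}
    (hLG : AuxLap G LG) (hLH : AuxLap H LH)
    (hball : ∀ (x : V) (r : ℕ), ∃ y : W, BallIso G H x y r) (P : Polynomial ℝ) :
    ‖Polynomial.aeval LG P‖ ≤ ‖Polynomial.aeval LH P‖ := by
  classical
  set M := ‖Polynomial.aeval LH P‖ with hM
  have hM0 : 0 ≤ M := norm_nonneg _
  -- functions supported in a ball
  have hloc : ∀ (x : V) (n : ℕ) (f : lp (fun _ : V => ℝ) 2),
      (∀ v, v ∉ gball G x n → f v = 0) → ‖Polynomial.aeval LG P f‖ ≤ M * ‖f‖ := by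
    intro x n f hf
    obtain ⟨y, e, h1, h2⟩ := hball x (n + P.natDegree)
    obtain ⟨g, hg⟩ := AuxRel.exists e f hf
    rw [(AuxRel.aeval hLG hLH e h1 h2 P le_rfl hg).norm_eq le_rfl,
      hg.norm_eq (Nat.le_add_right _ _)]
    exact ContinuousLinearMap.le_opNorm _ _
  -- finitely supported functions
  have hfin : ∀ (k : ℕ) (s : Finset V), s.card ≤ k → ∀ f : lp (fun _ : V => ℝ) 2,
      (∀ v, v ∉ s → f v = 0) → ‖Polynomial.aeval LG P f‖ ^ 2 ≤ M ^ 2 * ‖f‖ ^ 2 := by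
    intro k
    induction k with
    | zero =>
      intro s hs f hf
      have : f = 0 := by
        ext v
        have hs' : s = ∅ := by simpa using hs
        simpa using hf v (by simp [hs'])
      simp [this]
    | succ k ih =>
      intro s hs f hf
      rcases s.eq_empty_or_nonempty with rfl | ⟨x, hx⟩
      · exact ih ∅ (by simp) f hf
      let S : Set V := {v | G.Reachable x v}
      obtain ⟨f₁, f₂, hsum, a1, a2, b1, b2⟩ := aux_restrict S f
      have c1 := aux_vanish hLG S (fun a b hab ha hb => ha (hb.trans hab.symm.reachable)) P f₁ a2
      have c2 := aux_vanish hLG Sᶜ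
        (fun a b hab ha hb => by
          have ha' : G.Reachable x a := by simpa [S] using ha
          exact hb (ha'.trans hab.reachable)) P f₂ (fun v hv => b1 v (by simpa using hv))
      have c2' : ∀ v ∈ S, (Polynomial.aeval LG P f₂) v = 0 := fun v hv => c2 v (by simpa using hv)
      have d1 : ‖Polynomial.aeval LG P f₁‖ ^ 2 ≤ M ^ 2 * ‖f₁‖ ^ 2 := by
        rw [← mul_pow]
        refine pow_le_pow_left₀ (norm_nonneg _) (hloc x (s.sup (G.dist x)) f₁ fun v hv => ?_) 2
        by_cases hvS : v ∈ S
        · rw [a1 v hvS]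
          refine hf v fun hvs => hv ⟨hvS, Finset.le_sup (f := G.dist x) hvs⟩
        · exact a2 v hvS
      have d2 : ‖Polynomial.aeval LG P f₂‖ ^ 2 ≤ M ^ 2 * ‖f₂‖ ^ 2 := by
        refine ih (s.erase x) (by rw [Finset.card_erase_of_mem hx]; omega) f₂ fun v hv => ?_
        by_cases hvS : v ∈ S
        · exact b1 v hvS
        · rw [b2 v hvS]
          refine hf v fun hvs => hv (Finset.mem_erase.2 ⟨?_, hvs⟩)
          rintro rfl
          exact hvS (SimpleGraph.Reachable.refl _)
      rw [hsum, map_add, aux_orth S _ _ c1 c2', aux_orth S _ _ a2 b1]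
      linarith
  refine ContinuousLinearMap.opNorm_le_bound _ hM0 fun f => ?_
  have hs : HasSum (fun i => lp.single 2 i (f i : ℝ)) f := lp.hasSum_single (by simp) f
  have ht1 : Filter.Tendsto (fun s : Finset V =>
      ‖Polynomial.aeval LG P (∑ i ∈ s, lp.single 2 i (f i : ℝ))‖) Filter.atTop
      (nhds ‖Polynomial.aeval LG P f‖) :=
    (((Polynomial.aeval LG P).continuous.tendsto f).comp hs).norm
  have ht2 : Filter.Tendsto (fun s : Finset V =>
      M * ‖∑ i ∈ s, lp.single (E := fun _ : V => ℝ) 2 i (f i : ℝ)‖) Filter.atTop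
      (nhds (M * ‖f‖)) := (Filter.Tendsto.norm hs).const_mul M
  refine le_of_tendsto_of_tendsto' ht1 ht2 fun s => ?_
  refine abs_le_of_sq_le_sq' ?_ (by positivity) |>.2
  rw [mul_pow]
  refine hfin s.card s le_rfl _ fun v hv => ?_
  rw [lp.coeFn_sum, Finset.sum_apply]
  refine Finset.sum_eq_zero fun i hi => ?_
  refine lp.single_apply_ne _ _ _ ?_
  rintro rfl
  exact hv hi

lemma aux_symm [G.LocallyFinite]
    {LG : lp (fun _ : V => ℝ) 2 →L[ℝ] lp (fun _ : V => ℝ) 2} (hLG : AuxLap G LG)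
    (f g : lp (fun _ : V => ℝ) 2) : inner ℝ (LG f) g = inner ℝ f (LG g) := by
  classical
  have hadj : ContinuousLinearMap.adjoint LG = LG := by
    ext f v
    have hs : LG (lp.single 2 v (1 : ℝ)) = (G.degree v : ℝ) • lp.single 2 v (1 : ℝ)
        - ∑ u ∈ G.neighborFinset v, lp.single 2 u (1 : ℝ) := by
      ext w
      rw [hLG]
      simp only [lp.coeFn_sub, lp.coeFn_smul, lp.coeFn_sum, Pi.sub_apply, Pi.smul_apply,
        Finset.sum_apply, lp.coeFn_single, smul_eq_mul, Pi.single_apply]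
      congr 1
      · by_cases h : w = v
        · subst h; simp
        · simp [h]
      · simp [SimpleGraph.adj_comm]
    have h1 : (ContinuousLinearMap.adjoint LG f) v
        = inner ℝ (lp.single (E := fun _ : V => ℝ) 2 v (1 : ℝ))
          (ContinuousLinearMap.adjoint LG f) := by
      rw [lp.inner_single_left]; simp
    rw [h1, ContinuousLinearMap.adjoint_inner_right, hs, inner_sub_left, inner_smul_left,
      sum_inner, hLG]
    simp [lp.inner_single_left]
  rw [← ContinuousLinearMap.adjoint_inner_right, hadj]

end GraphHelpers

/-- If two bounded-degree countable graphs are equivalent, then for every real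
polynomial `P` the operator norms of `P` applied to their ℓ²-Laplacians agree, and
consequently the two Laplacians have the same spectrum. -/
theorem stmt10 {V W : Type} (G : SimpleGraph V) (H : SimpleGraph W)
    [G.LocallyFinite] [H.LocallyFinite] (d : ℕ)
    (hdG : ∀ x : V, G.degree x ≤ d) (hdH : ∀ y : W, H.degree y ≤ d)
    (heq : GraphEquiv G H)
    (LG : lp (fun _ : V => ℝ) 2 →L[ℝ] lp (fun _ : V => ℝ) 2)
    (LH : lp (fun _ : W => ℝ) 2 →L[ℝ] lp (fun _ : W => ℝ) 2)
    (hLG : ∀ (f : lp (fun _ : V => ℝ) 2) (x : V),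
      (LG f : ∀ _ : V, ℝ) x
        = (G.degree x : ℝ) * (f : ∀ _ : V, ℝ) x - ∑ y ∈ G.neighborFinset x, (f : ∀ _ : V, ℝ) y)
    (hLH : ∀ (f : lp (fun _ : W => ℝ) 2) (y : W),
      (LH f : ∀ _ : W, ℝ) y
        = (H.degree y : ℝ) * (f : ∀ _ : W, ℝ) y - ∑ z ∈ H.neighborFinset y, (f : ∀ _ : W, ℝ) z) :
    (∀ P : Polynomial ℝ, ‖Polynomial.aeval LG P‖ = ‖Polynomial.aeval LH P‖) ∧
    spectrum ℝ LG = spectrum ℝ LH := by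
  have hG : AuxLap G LG := hLG
  have hH : AuxLap H LH := hLH
  have hP : ∀ P : Polynomial ℝ, ‖Polynomial.aeval LG P‖ = ‖Polynomial.aeval LH P‖ := fun P =>
    le_antisymm (aux_bound hG hH heq.1 P)
      (aux_bound hH hG (fun y r => (heq.2 y r).imp fun _ h => aux_ballIso_symm h) P)
  refine ⟨hP, ?_⟩
  ext lam
  rw [spectrum.mem_iff, spectrum.mem_iff, not_iff_not]
  exact ⟨aux_spec_transfer LG LH (aux_symm hG) hP lam,
    aux_spec_transfer LH LG (aux_symm hH) (fun P => (hP P).symm) lam⟩
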